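/- Let X be a di-exact z-exact category. Then the category ses(X) of short exact sequences of X is di-exact if and only if the lattice nsub(A) of normal subobjects is distributive for every object A of X. -/

import Mathlib

open CategoryTheory CategoryTheory.Limits

universe v u

variable {C : Type u} [Category.{v} C]

/-- A morphism is a *normal monomorphism* if it is a kernel of some morphism. -/
def IsNormalMonoMap [HasZeroMorphisms C] {X Y : C} (f : X ⟶ Y) : Prop :=
  Nonempty (NormalMono f)

/-- A morphism is a *normal epimorphism* if it is a cokernel of some morphism. -/
def IsNormalEpiMap [HasZeroMorphisms C] {X Y : C} (f : X ⟶ Y) : Prop :=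
  Nonempty (NormalEpi f)

/-- A morphism is *normal* if it factors as a normal epimorphism followed by a
normal monomorphism. -/
def IsNormalMap [HasZeroMorphisms C] {X Y : C} (f : X ⟶ Y) : Prop :=
  ∃ (I : C) (e : X ⟶ I) (m : I ⟶ Y), IsNormalEpiMap e ∧ IsNormalMonoMap m ∧ e ≫ m = f

/-- A morphism is *antinormal* if it factors as a normal monomorphism followed by a
normal epimorphism. -/
def IsAntinormalMap [HasZeroMorphisms C] {X Y : C} (f : X ⟶ Y) : Prop :=
  ∃ (I : C) (m : X ⟶ I) (e : I ⟶ Y), IsNormalMonoMap m ∧ IsNormalEpiMap e ∧ m ≫ e = f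

variable (C) in
/-- A z-exact category is *di-exact* if every antinormal morphism is normal. -/
def IsDiExact [HasZeroMorphisms C] : Prop :=
  ∀ ⦃X Y : C⦄ (f : X ⟶ Y), IsAntinormalMap f → IsNormalMap f

variable (C) in
/-- A z-exact category is *homologically self-dual* if for every totally normal sequence of
monomorphisms `f : X ⟶ Y`, `g : Y ⟶ Z`, the induced morphism `Y/X ⟶ Z/X` between the
cokernels is a normal monomorphism. -/
def IsHomologicallySelfDual [HasZeroMorphisms C] : Prop :=
  ∀ ⦃X Y Z QY QZ : C⦄ (f : X ⟶ Y) (g : Y ⟶ Z),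
    IsNormalMonoMap f → IsNormalMonoMap g → IsNormalMonoMap (f ≫ g) →
    ∀ (p : Y ⟶ QY) (wp : f ≫ p = 0), IsColimit (CokernelCofork.ofπ p wp) →
    ∀ (q : Z ⟶ QZ) (wq : (f ≫ g) ≫ q = 0), IsColimit (CokernelCofork.ofπ q wq) →
    ∀ (u : QY ⟶ QZ), p ≫ u = g ≫ q → IsNormalMonoMap u

/-- The poset of normal subobjects of an object. -/
abbrev NormalSubobject [HasZeroMorphisms C] (A : C) : Type (max u v) :=
  {P : Subobject A // Nonempty (NormalMono P.arrow)}

/-- Modularity of the poset of normal subobjects, expressed via `IsLUB`/`IsGLB`. -/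
def NormalSubobjectsModular [HasZeroMorphisms C] (A : C) : Prop :=
  ∀ P Q R S T U V : NormalSubobject A, R ≤ P →
    IsLUB {Q, R} S → IsGLB {P, S} T → IsGLB {P, Q} U → IsLUB {U, R} V → T = V

/-- Distributivity of the poset of normal subobjects, expressed via `IsLUB`/`IsGLB`. -/
def NormalSubobjectsDistrib [HasZeroMorphisms C] (A : C) : Prop :=
  ∀ P Q R S T U V W : NormalSubobject A,
    IsLUB {Q, R} S → IsGLB {P, S} T → IsGLB {P, Q} U → IsGLB {P, R} V →
    IsLUB {U, V} W → T = W


/-- A short exact sequence in a pointed category: `f` is a kernel of `g` and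
`g` is a cokernel of `f`. -/
structure SES (C : Type u) [Category.{v} C] [HasZeroMorphisms C] : Type (max u v) where
  X : C
  Y : C
  Z : C
  f : X ⟶ Y
  g : Y ⟶ Z
  w : f ≫ g = 0
  isKernel : Nonempty (IsLimit (KernelFork.ofι f w))
  isCokernel : Nonempty (IsColimit (CokernelCofork.ofπ g w))

namespace SES

variable {C : Type u} [Category.{v} C] [HasZeroMorphisms C]

/-- Morphisms of short exact sequences: componentwise commuting triples. -/
@[ext] structure Hom (S T : SES C) : Type v where
  a : S.X ⟶ T.X
  b : S.Y ⟶ T.Y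
  c : S.Z ⟶ T.Z
  comm₁ : S.f ≫ b = a ≫ T.f
  comm₂ : S.g ≫ c = b ≫ T.g

instance : Category (SES C) where
  Hom := Hom
  id S := ⟨𝟙 _, 𝟙 _, 𝟙 _, by simp, by simp⟩
  comp u v := ⟨u.a ≫ v.a, u.b ≫ v.b, u.c ≫ v.c,
    by rw [← Category.assoc, u.comm₁, Category.assoc, v.comm₁, ← Category.assoc],
    by rw [← Category.assoc, u.comm₂, Category.assoc, v.comm₂, ← Category.assoc]⟩
  id_comp u := by apply Hom.ext <;> simp [CategoryStruct.id, CategoryStruct.comp]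
  comp_id u := by apply Hom.ext <;> simp [CategoryStruct.id, CategoryStruct.comp]
  assoc u v w := by apply Hom.ext <;> simp [CategoryStruct.comp]

instance : HasZeroMorphisms (SES C) where
  zero S T := ⟨⟨0, 0, 0, by simp, by simp⟩⟩
  comp_zero u T := by apply Hom.ext <;> exact comp_zero
  zero_comp S {T U} u := by apply Hom.ext <;> exact zero_comp

end SES

/-!
A short exact sequence is an object `Y` with a normal subobject `X`, written `(Y, X)`, and its
morphisms are those of the objects that carry the first subobject into the second. The normal
monomorphisms into `(A, X)` are the `(N, N ⊓ X) ⟶ (A, X)` with `N` normal in `A`, and the normal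
epimorphisms out of it are the `(A, X) ⟶ (B, p(X))` with `p : A ↠ B` normal. If `N ↠ I ↣ B` is the
normal factorization of `N ↣ A ↠ B`, so that `I = p(N)`, then the antinormal morphism
`(N, N ⊓ X) ⟶ (B, p(X))` is normal precisely when the image of `N ⊓ X` in `I` is the restriction
`p(N) ⊓ p(X)` of `p(X)`. Hence di-exactness of short exact sequences amounts to
`p(N ⊓ X) = p(N) ⊓ p(X)` for all normal epimorphisms `p`.

Because `p⁻¹(p(N)) = N ⊔ ker p`, this equation expresses distributivity of `N`, `X` and `ker p`:
distributivity replaces `X` by `X ⊔ ker p`, and when `ker p ≤ X` the equation holds in every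
di-exact category.
-/

section Kernels

variable [HasZeroMorphisms C] {A B K Q W : C}

/-- `k` is a kernel of `f`: the propositional form of `IsLimit (KernelFork.ofι k _)`. -/
def IsKernelOf (k : K ⟶ A) (f : A ⟶ B) : Prop :=
  ∃ w : k ≫ f = 0, Nonempty (IsLimit (KernelFork.ofι k w))

/-- `q` is a cokernel of `f`: the propositional form of `IsColimit (CokernelCofork.ofπ q _)`. -/
def IsCokernelOf (q : B ⟶ Q) (f : A ⟶ B) : Prop :=
  ∃ w : f ≫ q = 0, Nonempty (IsColimit (CokernelCofork.ofπ q w))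

theorem isKernelOf_kernel_ι (f : A ⟶ B) [HasKernel f] : IsKernelOf (kernel.ι f) f :=
  ⟨kernel.condition f, ⟨kernelIsKernel f⟩⟩

theorem isCokernelOf_cokernel_π (f : A ⟶ B) [HasCokernel f] : IsCokernelOf (cokernel.π f) f :=
  ⟨cokernel.condition f, ⟨cokernelIsCokernel f⟩⟩

namespace IsKernelOf

variable {k : K ⟶ A} {f : A ⟶ B}

theorem of_exists_lift [Mono k] (w : k ≫ f = 0)
    (h : ∀ ⦃W : C⦄ (t : W ⟶ A), t ≫ f = 0 → ∃ s, s ≫ k = t) : IsKernelOf k f :=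
  ⟨w, ⟨KernelFork.IsLimit.ofι' k w fun t ht => ⟨_, (h t ht).choose_spec⟩⟩⟩

theorem comp_eq_zero (h : IsKernelOf k f) : k ≫ f = 0 := h.1

theorem mono (h : IsKernelOf k f) : Mono k := by
  obtain ⟨_, ⟨hk⟩⟩ := h
  exact mono_of_isLimit_fork hk

theorem exists_lift (h : IsKernelOf k f) (t : W ⟶ A) (ht : t ≫ f = 0) : ∃ s, s ≫ k = t := by
  obtain ⟨_, ⟨hk⟩⟩ := h
  exact ⟨_, (KernelFork.IsLimit.lift' hk t ht).2⟩

theorem isNormalMonoMap (h : IsKernelOf k f) : IsNormalMonoMap k := by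
  obtain ⟨w, ⟨hk⟩⟩ := h
  exact ⟨⟨B, f, w, hk⟩⟩

end IsKernelOf

namespace IsCokernelOf

variable {q : B ⟶ Q} {f : A ⟶ B}

theorem of_exists_desc [Epi q] (w : f ≫ q = 0)
    (h : ∀ ⦃W : C⦄ (t : B ⟶ W), f ≫ t = 0 → ∃ s, q ≫ s = t) : IsCokernelOf q f :=
  ⟨w, ⟨CokernelCofork.IsColimit.ofπ' q w fun t ht => ⟨_, (h t ht).choose_spec⟩⟩⟩

theorem comp_eq_zero (h : IsCokernelOf q f) : f ≫ q = 0 := h.1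

theorem epi (h : IsCokernelOf q f) : Epi q := by
  obtain ⟨_, ⟨hq⟩⟩ := h
  exact epi_of_isColimit_cofork hq

theorem exists_desc (h : IsCokernelOf q f) (t : B ⟶ W) (ht : f ≫ t = 0) : ∃ s, q ≫ s = t := by
  obtain ⟨_, ⟨hq⟩⟩ := h
  exact ⟨_, (CokernelCofork.IsColimit.desc' hq t ht).2⟩

theorem isNormalEpiMap (h : IsCokernelOf q f) : IsNormalEpiMap q := by
  obtain ⟨w, ⟨hq⟩⟩ := h
  exact ⟨⟨A, f, w, hq⟩⟩

theorem comp_eq_zero_iff {f' : K ⟶ B} (h : IsCokernelOf q f) (h' : IsCokernelOf q f')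
    (y : B ⟶ W) : f ≫ y = 0 ↔ f' ≫ y = 0 := by
  constructor <;> intro hy
  · obtain ⟨z, rfl⟩ := h.exists_desc y hy
    rw [reassoc_of% h'.comp_eq_zero, zero_comp]
  · obtain ⟨z, rfl⟩ := h'.exists_desc y hy
    rw [reassoc_of% h.comp_eq_zero, zero_comp]

end IsCokernelOf

namespace IsNormalMonoMap

variable {k : K ⟶ A}

theorem exists_isKernelOf (hk : IsNormalMonoMap k) : ∃ (B : C) (f : A ⟶ B), IsKernelOf k f := by
  obtain ⟨h⟩ := hk
  exact ⟨h.Z, h.g, h.w, ⟨h.isLimit⟩⟩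

theorem mono (hk : IsNormalMonoMap k) : Mono k := by
  obtain ⟨_, _, h⟩ := hk.exists_isKernelOf
  exact h.mono

theorem exists_lift (hk : IsNormalMonoMap k) (t : W ⟶ A)
    (ht : ∀ ⦃V : C⦄ (y : A ⟶ V), k ≫ y = 0 → t ≫ y = 0) : ∃ s, s ≫ k = t := by
  obtain ⟨_, f, h⟩ := hk.exists_isKernelOf
  exact h.exists_lift t (ht f h.comp_eq_zero)

theorem isKernelOf (hk : IsNormalMonoMap k) {q : A ⟶ Q} (hq : IsCokernelOf q k) :
    IsKernelOf k q := by
  have := hk.mono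
  refine .of_exists_lift hq.comp_eq_zero fun W t ht => hk.exists_lift t fun V y hy => ?_
  obtain ⟨z, rfl⟩ := hq.exists_desc y hy
  rw [reassoc_of% ht, zero_comp]

theorem comp_of_isKernelOf {n : A ⟶ B} {g : B ⟶ Q} (hn : IsNormalMonoMap n)
    (hk : IsKernelOf k (n ≫ g)) [HasCokernel (k ≫ n)] : IsNormalMonoMap (k ≫ n) := by
  have := hn.mono
  have := hk.mono
  refine IsKernelOf.isNormalMonoMap (f := cokernel.π (k ≫ n)) <|
    .of_exists_lift (cokernel.condition _) fun W t ht => ?_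
  have kills {V : C} (y : B ⟶ V) (hy : (k ≫ n) ≫ y = 0) : t ≫ y = 0 := by
    rw [← cokernel.π_desc _ y hy, reassoc_of% ht, zero_comp]
  obtain ⟨s, rfl⟩ := hn.exists_lift t fun V y hy => kills y (by rw [Category.assoc, hy, comp_zero])
  obtain ⟨r, rfl⟩ := hk.exists_lift s <| by
    rw [← Category.assoc]
    exact kills g (by rw [Category.assoc, hk.comp_eq_zero])
  exact ⟨r, (Category.assoc _ _ _).symm⟩

end IsNormalMonoMap

namespace IsNormalEpiMap

variable {q : B ⟶ Q}

theorem exists_isCokernelOf (hq : IsNormalEpiMap q) :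
    ∃ (A : C) (f : A ⟶ B), IsCokernelOf q f := by
  obtain ⟨h⟩ := hq
  exact ⟨h.W, h.g, h.w, ⟨h.isColimit⟩⟩

theorem epi (hq : IsNormalEpiMap q) : Epi q := by
  obtain ⟨_, _, h⟩ := hq.exists_isCokernelOf
  exact h.epi

theorem exists_desc (hq : IsNormalEpiMap q) (t : B ⟶ W)
    (ht : ∀ ⦃V : C⦄ (y : V ⟶ B), y ≫ q = 0 → y ≫ t = 0) : ∃ s, q ≫ s = t := by
  obtain ⟨_, f, h⟩ := hq.exists_isCokernelOf
  exact h.exists_desc t (ht f h.comp_eq_zero)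

theorem isCokernelOf (hq : IsNormalEpiMap q) {k : K ⟶ B} (hk : IsKernelOf k q) :
    IsCokernelOf q k := by
  have := hq.epi
  refine .of_exists_desc hk.comp_eq_zero fun W t ht => hq.exists_desc t fun V y hy => ?_
  obtain ⟨z, rfl⟩ := hk.exists_lift y hy
  rw [Category.assoc, ht, comp_zero]

end IsNormalEpiMap

theorem IsDiExact.exists_factorization (hdi : IsDiExact C) {N : C} {n : N ⟶ A} {p : A ⟶ B}
    (hn : IsNormalMonoMap n) (hp : IsNormalEpiMap p) :
    ∃ (J : C) (e : N ⟶ J) (m : J ⟶ B), IsNormalEpiMap e ∧ IsNormalMonoMap m ∧ e ≫ m = n ≫ p :=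
  hdi _ ⟨A, n, p, hn, hp, rfl⟩

end Kernels

namespace NormalSubobject

variable [HasZeroMorphisms C] {A B K N W : C}

theorem factors_iff (P : NormalSubobject A) (t : W ⟶ A) :
    P.1.Factors t ↔ ∀ ⦃V : C⦄ (y : A ⟶ V), P.1.arrow ≫ y = 0 → t ≫ y = 0 := by
  constructor
  · intro h V y hy
    rw [← P.1.factorThru_arrow t h, Category.assoc, hy, comp_zero]
  · intro h
    obtain ⟨s, rfl⟩ := IsNormalMonoMap.exists_lift P.2 t h
    exact Subobject.factors_comp_arrow s

theorem le_iff_factors {P Q : NormalSubobject A} : P ≤ Q ↔ Q.1.Factors P.1.arrow :=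
  ⟨fun h => Subobject.factors_of_le _ h P.1.factors_self, Subobject.le_of_factors⟩

theorem le_iff {P Q : NormalSubobject A} :
    P ≤ Q ↔ ∀ ⦃V : C⦄ (y : A ⟶ V), Q.1.arrow ≫ y = 0 → P.1.arrow ≫ y = 0 := by
  rw [le_iff_factors, factors_iff]

theorem ext_of_comp_eq_zero_iff {P Q : NormalSubobject A}
    (h : ∀ ⦃V : C⦄ (y : A ⟶ V), P.1.arrow ≫ y = 0 ↔ Q.1.arrow ≫ y = 0) : P = Q :=
  le_antisymm (le_iff.2 fun _ y => (h y).2) (le_iff.2 fun _ y => (h y).1)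

section Ker

variable [HasKernels C]

/-- The kernel of `f` as a normal subobject of its source. -/
noncomputable def ker (f : A ⟶ B) : NormalSubobject A :=
  ⟨kernelSubobject f, IsKernelOf.isNormalMonoMap <|
    .of_exists_lift (kernelSubobject_arrow_comp f)
      fun _ t ht => ⟨_, factorThruKernelSubobject_comp_arrow f t ht⟩⟩

theorem ker_factors_iff (f : A ⟶ B) (t : W ⟶ A) : (ker f).1.Factors t ↔ t ≫ f = 0 :=
  kernelSubobject_factors_iff f t

theorem ker_arrow_comp (f : A ⟶ B) : (ker f).1.arrow ≫ f = 0 :=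
  kernelSubobject_arrow_comp f

end Ker

variable [HasKernels C] [HasCokernels C]

/-- The normal image of `f`, the kernel of its cokernel: the least normal subobject of the target
through which `f` factors. -/
noncomputable def normalImage (f : A ⟶ B) : NormalSubobject B :=
  ker (cokernel.π f)

theorem normalImage_arrow_comp_eq_zero_iff (f : A ⟶ B) (y : B ⟶ W) :
    (normalImage f).1.arrow ≫ y = 0 ↔ f ≫ y = 0 := by
  constructor <;> intro h
  · have hf : (normalImage f).1.Factors f := (ker_factors_iff _ _).2 (cokernel.condition f)
    exact (factors_iff _ _).1 hf y h
  · rw [← cokernel.π_desc f y h, ← Category.assoc, normalImage, ker_arrow_comp, zero_comp]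

theorem normalImage_arrow (P : NormalSubobject A) : normalImage P.1.arrow = P :=
  ext_of_comp_eq_zero_iff fun _ y => normalImage_arrow_comp_eq_zero_iff _ y

theorem normalImage_le_iff {f : A ⟶ B} {P : NormalSubobject B} :
    normalImage f ≤ P ↔ P.1.Factors f := by
  simp only [le_iff, factors_iff, normalImage_arrow_comp_eq_zero_iff]

theorem normalImage_factors_iff {n : N ⟶ A} (hn : IsNormalMonoMap n) (t : W ⟶ A) :
    (normalImage n).1.Factors t ↔ ∃ s, s ≫ n = t := by
  simp only [factors_iff, normalImage_arrow_comp_eq_zero_iff]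
  refine ⟨hn.exists_lift t, ?_⟩
  rintro ⟨s, rfl⟩ V y hy
  rw [Category.assoc, hy, comp_zero]

theorem factors_iff_comp_cokernel_π_eq_zero (P : NormalSubobject A) (t : W ⟶ A) :
    P.1.Factors t ↔ t ≫ cokernel.π P.1.arrow = 0 := by
  rw [← ker_factors_iff, ← normalImage, normalImage_arrow]

theorem normalImage_comp_of_epi (e : K ⟶ A) [Epi e] (f : A ⟶ B) :
    normalImage (e ≫ f) = normalImage f :=
  ext_of_comp_eq_zero_iff fun _ y => by
    rw [normalImage_arrow_comp_eq_zero_iff, normalImage_arrow_comp_eq_zero_iff, Category.assoc,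
      comp_eq_zero_iff_of_epi]

theorem normalImage_eq_of_isCokernelOf {q : B ⟶ W} {f : A ⟶ B} {f' : K ⟶ B}
    (h : IsCokernelOf q f) (h' : IsCokernelOf q f') : normalImage f = normalImage f' :=
  ext_of_comp_eq_zero_iff fun _ y => by
    simp only [normalImage_arrow_comp_eq_zero_iff, h.comp_eq_zero_iff h']

theorem isCokernelOf_of_normalImage_eq {q : B ⟶ W} {f : A ⟶ B} {f' : K ⟶ B}
    (h : IsCokernelOf q f) (hff' : normalImage f = normalImage f') : IsCokernelOf q f' := by
  have kills {V : C} (y : B ⟶ V) : f' ≫ y = 0 ↔ f ≫ y = 0 := by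
    rw [← normalImage_arrow_comp_eq_zero_iff, ← hff', normalImage_arrow_comp_eq_zero_iff]
  have := h.epi
  exact .of_exists_desc ((kills q).2 h.comp_eq_zero) fun V y hy => h.exists_desc y ((kills y).1 hy)

theorem normalImage_le_of_comp_le {f : A ⟶ B} {k : K ⟶ B} {m : B ⟶ W} (hm : IsNormalMonoMap m)
    (hfm : IsNormalMap (f ≫ m)) (h : normalImage (k ≫ m) ≤ normalImage (f ≫ m)) :
    normalImage k ≤ normalImage f := by
  obtain ⟨I, r, i, hr, hi, hri⟩ := hfm
  have := hm.mono
  have := hr.epi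
  obtain ⟨j, rfl⟩ : ∃ j, j ≫ m = i := hm.exists_lift i fun V y hy => by
    rw [← cancel_epi r, reassoc_of% hri, hy, comp_zero, comp_zero]
  obtain ⟨s, hs⟩ : ∃ s, s ≫ j ≫ m = k ≫ m := by
    rwa [normalImage_le_iff, ← hri, normalImage_comp_of_epi, normalImage_factors_iff hi] at h
  obtain rfl : r ≫ j = f := by rw [← cancel_mono m, Category.assoc, hri]
  obtain rfl : s ≫ j = k := by rw [← cancel_mono m, Category.assoc, hs]
  rw [normalImage_comp_of_epi r, normalImage_le_iff]
  exact Subobject.factors_of_factors_right s (normalImage_le_iff.1 le_rfl)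

noncomputable instance : Max (NormalSubobject A) :=
  ⟨fun P Q => ker (cokernel.π Q.1.arrow ≫ cokernel.π (P.1.arrow ≫ cokernel.π Q.1.arrow))⟩

/- The pullback of `P` and `Q` is the kernel of `P ↣ A ↠ A/Q`; the normal image only turns it into a
subobject of `A`. -/
noncomputable instance : Min (NormalSubobject A) :=
  ⟨fun P Q => normalImage (kernel.ι (P.1.arrow ≫ cokernel.π Q.1.arrow) ≫ P.1.arrow)⟩

theorem sup_arrow_comp_eq_zero_iff (P Q : NormalSubobject A) (y : A ⟶ W) :
    (P ⊔ Q).1.arrow ≫ y = 0 ↔ P.1.arrow ≫ y = 0 ∧ Q.1.arrow ≫ y = 0 := by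
  change (ker _).1.arrow ≫ y = 0 ↔ _
  constructor
  · intro h
    exact ⟨(factors_iff _ _).1 ((ker_factors_iff _ _).2 (by
        rw [← Category.assoc, cokernel.condition])) y h,
      (factors_iff _ _).1 ((ker_factors_iff _ _).2 (by
        rw [cokernel.condition_assoc, zero_comp])) y h⟩
  · rintro ⟨hP, hQ⟩
    obtain ⟨y, rfl⟩ := (isCokernelOf_cokernel_π Q.1.arrow).exists_desc y hQ
    obtain ⟨y, rfl⟩ := (isCokernelOf_cokernel_π _).exists_desc y ((Category.assoc _ _ _).trans hP)
    rw [← Category.assoc (cokernel.π _), ← Category.assoc, ker_arrow_comp, zero_comp]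

theorem inf_factors_iff (P Q : NormalSubobject A) (t : W ⟶ A) :
    (P ⊓ Q).1.Factors t ↔ P.1.Factors t ∧ Q.1.Factors t := by
  have hk := isKernelOf_kernel_ι (P.1.arrow ≫ cokernel.π Q.1.arrow)
  refine (normalImage_factors_iff (IsNormalMonoMap.comp_of_isKernelOf P.2 hk) t).trans ?_
  rw [factors_iff_comp_cokernel_π_eq_zero Q]
  constructor
  · rintro ⟨s, rfl⟩
    refine ⟨?_, by simp only [Category.assoc, kernel.condition, comp_zero]⟩
    simpa only [Category.assoc] using Subobject.factors_comp_arrow (s ≫ kernel.ι _)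
  · rintro ⟨hP, hQ⟩
    obtain ⟨s, hs⟩ := hk.exists_lift (P.1.factorThru t hP) <| by
      rwa [Subobject.factorThru_arrow_assoc]
    exact ⟨s, by rw [← Category.assoc, hs, Subobject.factorThru_arrow]⟩

noncomputable instance : Lattice (NormalSubobject A) where
  sup := (· ⊔ ·)
  inf := (· ⊓ ·)
  le_sup_left P Q := le_iff.2 fun _ y hy => ((sup_arrow_comp_eq_zero_iff P Q y).1 hy).1
  le_sup_right P Q := le_iff.2 fun _ y hy => ((sup_arrow_comp_eq_zero_iff P Q y).1 hy).2
  sup_le P Q _ hP hQ := le_iff.2 fun _ y hy =>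
    (sup_arrow_comp_eq_zero_iff P Q y).2 ⟨le_iff.1 hP y hy, le_iff.1 hQ y hy⟩
  inf_le_left P Q := le_iff_factors.2 ((inf_factors_iff P Q _).1 (Subobject.factors_self _)).1
  inf_le_right P Q := le_iff_factors.2 ((inf_factors_iff P Q _).1 (Subobject.factors_self _)).2
  le_inf _ Q R hQ hR := le_iff_factors.2 <|
    (inf_factors_iff Q R _).2 ⟨le_iff_factors.1 hQ, le_iff_factors.1 hR⟩

theorem normalImage_inf_normalImage {X : C} {n : N ⟶ A} {x : X ⟶ A} {g : A ⟶ B} {k : K ⟶ N}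
    (hn : IsNormalMonoMap n) (hx : IsKernelOf x g) (hk : IsKernelOf k (n ≫ g)) :
    normalImage n ⊓ normalImage x = normalImage (k ≫ n) := by
  apply le_antisymm
  · rw [le_iff_factors, normalImage_factors_iff (hn.comp_of_isKernelOf hk)]
    obtain ⟨s, hs⟩ := (normalImage_factors_iff hn _).1 (le_iff_factors.1 inf_le_left)
    obtain ⟨t, ht⟩ := (normalImage_factors_iff hx.isNormalMonoMap _).1
      (le_iff_factors.1 inf_le_right)
    obtain ⟨r, rfl⟩ := hk.exists_lift s (by
      rw [← Category.assoc, hs, ← ht, Category.assoc, hx.comp_eq_zero, comp_zero])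
    exact ⟨r, by rw [← hs, Category.assoc]⟩
  · rw [normalImage_le_iff, inf_factors_iff, normalImage_factors_iff hn,
      normalImage_factors_iff hx.isNormalMonoMap]
    exact ⟨⟨k, rfl⟩, hx.exists_lift _ (by rw [Category.assoc, hk.comp_eq_zero])⟩

/-- The direct image of a normal subobject along `p`: the normal image of its restriction. -/
noncomputable def map (p : A ⟶ B) (P : NormalSubobject A) : NormalSubobject B :=
  normalImage (P.1.arrow ≫ p)

theorem map_arrow_comp_eq_zero_iff (p : A ⟶ B) (P : NormalSubobject A) (y : B ⟶ W) :
    (P.map p).1.arrow ≫ y = 0 ↔ P.1.arrow ≫ p ≫ y = 0 := by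
  rw [map, normalImage_arrow_comp_eq_zero_iff, Category.assoc]

theorem map_normalImage (p : A ⟶ B) (f : K ⟶ A) : (normalImage f).map p = normalImage (f ≫ p) :=
  ext_of_comp_eq_zero_iff fun _ y => by
    rw [map_arrow_comp_eq_zero_iff, normalImage_arrow_comp_eq_zero_iff,
      normalImage_arrow_comp_eq_zero_iff, Category.assoc]

theorem map_mono (p : A ⟶ B) : Monotone (map p) := fun P Q h => le_iff.2 fun _ y => by
  simpa only [map_arrow_comp_eq_zero_iff] using le_iff.1 h (p ≫ y)

protected theorem map_sup (p : A ⟶ B) (P Q : NormalSubobject A) :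
    (P ⊔ Q).map p = P.map p ⊔ Q.map p :=
  ext_of_comp_eq_zero_iff fun _ y => by
    simp only [map_arrow_comp_eq_zero_iff, sup_arrow_comp_eq_zero_iff]

theorem map_le_of_le_ker {p : A ⟶ B} {P : NormalSubobject A} (h : P ≤ ker p)
    (Q : NormalSubobject B) : P.map p ≤ Q := by
  rw [map, normalImage_le_iff, (ker_factors_iff p _).1 (le_iff_factors.1 h)]
  exact Subobject.factors_zero

theorem map_sup_of_le_ker {p : A ⟶ B} {M : NormalSubobject A} (h : M ≤ ker p)
    (P : NormalSubobject A) : (P ⊔ M).map p = P.map p := by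
  rw [NormalSubobject.map_sup, sup_eq_left.2 (map_le_of_le_ker h _)]

theorem map_normalImage_inf_map_normalImage {J X Q : C} {n : N ⟶ A} {x : X ⟶ A} {p : A ⟶ B}
    {e : N ⟶ J} [Epi e] {m : J ⟶ B} {q : B ⟶ Q} {k : K ⟶ J} (hm : IsNormalMonoMap m)
    (hem : e ≫ m = n ≫ p) (hq : IsCokernelOf q (x ≫ p)) (hk : IsKernelOf k (m ≫ q)) :
    (normalImage n).map p ⊓ (normalImage x).map p = normalImage (k ≫ m) := by
  have hqι := hq.isNormalEpiMap.isCokernelOf (isKernelOf_kernel_ι q)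
  rw [map_normalImage, map_normalImage, ← hem, normalImage_comp_of_epi,
    normalImage_eq_of_isCokernelOf hq hqι,
    normalImage_inf_normalImage hm (isKernelOf_kernel_ι q) hk]

/- Let `w ∘ v` be the normal factorization of `N ↣ A ↠ A/X`, so that `N ⊓ X` is the kernel of `v`.
A morphism `y` that vanishes on `p(N ⊓ X)` factors on `N` through `v`; since `A/X` is a quotient
of `B`, the factorization descends to `p(N)`, so `y` vanishes on `p(N) ⊓ p(X)`. -/
theorem map_inf_of_ker_le (hdi : IsDiExact C) {p : A ⟶ B} (hp : IsNormalEpiMap p)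
    (N : NormalSubobject A) {X : NormalSubobject A} (hX : ker p ≤ X) :
    (N ⊓ X).map p = N.map p ⊓ X.map p := by
  refine le_antisymm (Monotone.map_inf_le (map_mono p) N X) (le_iff.2 fun V y hy => ?_)
  rw [map_arrow_comp_eq_zero_iff] at hy
  obtain ⟨q, hq⟩ : ∃ q, p ≫ q = cokernel.π X.1.arrow := hp.exists_desc _ fun V t ht =>
    (factors_iff_comp_cokernel_π_eq_zero X t).1 <|
      Subobject.factors_of_le t hX ((ker_factors_iff p t).2 ht)
  obtain ⟨J, α, m, hα, hm, hαm⟩ := hdi.exists_factorization N.2 hp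
  obtain ⟨I, v, w, hv, hw, hvw⟩ :=
    hdi.exists_factorization N.2 (isCokernelOf_cokernel_π X.1.arrow).isNormalEpiMap
  have := hα.epi
  have := hw.mono
  obtain ⟨β, rfl⟩ : ∃ β, α ≫ β = v := hα.exists_desc v fun V t ht => by
    rw [← cancel_mono w, Category.assoc, hvw, ← hq, ← reassoc_of% hαm, reassoc_of% ht,
      zero_comp, zero_comp]
  have hβw : β ≫ w = m ≫ q := by
    rw [← cancel_epi α, ← Category.assoc, hvw, reassoc_of% hαm, hq]
  obtain ⟨z, hz⟩ : ∃ z, (α ≫ β) ≫ z = N.1.arrow ≫ p ≫ y := hv.exists_desc _ fun V t ht => by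
    rw [← Category.assoc]
    refine (factors_iff _ _).1 ((inf_factors_iff N X _).2 ⟨Subobject.factors_comp_arrow t, ?_⟩) _ hy
    rw [factors_iff_comp_cokernel_π_eq_zero, Category.assoc, ← hvw, Category.assoc,
      reassoc_of% ht, zero_comp]
  have hmy : m ≫ y = β ≫ z := by
    rw [← cancel_epi α, reassoc_of% hαm, ← hz, Category.assoc]
  obtain ⟨s, hs⟩ : ∃ s, s ≫ m = (N.map p ⊓ X.map p).1.arrow := by
    rw [← normalImage_factors_iff hm, ← normalImage_comp_of_epi α, hαm]
    exact le_iff_factors.1 inf_le_left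
  have hsβ : s ≫ β = 0 := by
    have hXq : (X.map p).1.arrow ≫ q = 0 := by
      rw [map_arrow_comp_eq_zero_iff, hq, cokernel.condition]
    rw [← cancel_mono w, Category.assoc, hβw, reassoc_of% hs,
      le_iff.1 inf_le_right q hXq, zero_comp]
  rw [← hs, Category.assoc, hmy, reassoc_of% hsβ, zero_comp]

end NormalSubobject

section DirectImages

variable [HasZeroMorphisms C] [HasKernels C] [HasCokernels C]

open NormalSubobject

theorem normalSubobjectsDistrib_iff (A : C) :
    NormalSubobjectsDistrib A ↔
      ∀ P Q R : NormalSubobject A, P ⊓ (Q ⊔ R) = P ⊓ Q ⊔ P ⊓ R := by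
  constructor
  · intro h P Q R
    exact h P Q R _ _ _ _ _ isLUB_pair isGLB_pair isGLB_pair isGLB_pair isLUB_pair
  · intro h P Q R S T U V W hS hT hU hV hW
    obtain rfl := hS.unique isLUB_pair
    obtain rfl := hU.unique isGLB_pair
    obtain rfl := hV.unique isGLB_pair
    rw [hT.unique isGLB_pair, hW.unique isLUB_pair, h]

variable (C) in
/-- Taking direct images of normal subobjects along normal epimorphisms preserves binary meets.
This is the condition through which di-exactness of `SES C` and distributivity are compared. -/
def DirectImagesPreserveMeets : Prop :=
  ∀ ⦃A B : C⦄ (p : A ⟶ B), IsNormalEpiMap p → ∀ N X : NormalSubobject A,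
    (N ⊓ X).map p = N.map p ⊓ X.map p

theorem DirectImagesPreserveMeets.sup_inf_sup_le (h : DirectImagesPreserveMeets C) {A : C}
    (M N X : NormalSubobject A) : (M ⊔ N) ⊓ (M ⊔ X) ≤ M ⊔ N ⊓ X := by
  set p := cokernel.π M.1.arrow
  have hM : M ≤ ker p := (normalImage_arrow M).ge
  have hmap : ((M ⊔ N) ⊓ (M ⊔ X)).map p ≤ (N ⊓ X).map p := calc
    ((M ⊔ N) ⊓ (M ⊔ X)).map p ≤ (M ⊔ N).map p ⊓ (M ⊔ X).map p := (map_mono p).map_inf_le _ _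
    _ = N.map p ⊓ X.map p := by
      rw [sup_comm M, sup_comm M, map_sup_of_le_ker hM, map_sup_of_le_ker hM]
    _ = (N ⊓ X).map p := (h p (isCokernelOf_cokernel_π _).isNormalEpiMap N X).symm
  refine le_iff.2 fun V y hy => ?_
  obtain ⟨hMy, hNXy⟩ := (sup_arrow_comp_eq_zero_iff _ _ _).1 hy
  obtain ⟨z, rfl⟩ := (isCokernelOf_cokernel_π _).exists_desc y hMy
  rw [← map_arrow_comp_eq_zero_iff] at hNXy ⊢
  exact le_iff.1 hmap z hNXy

theorem directImagesPreserveMeets_iff (hdi : IsDiExact C) :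
    DirectImagesPreserveMeets C ↔ ∀ A : C, NormalSubobjectsDistrib A := by
  simp only [normalSubobjectsDistrib_iff]
  constructor
  · intro h A
    let _ : DistribLattice (NormalSubobject A) :=
      { (inferInstance : Lattice (NormalSubobject A)) with le_sup_inf := h.sup_inf_sup_le }
    exact inf_sup_left
  · intro h A B p hp N X
    let K := ker p
    have map_sup_ker (P : NormalSubobject A) : (P ⊔ K).map p = P.map p := map_sup_of_le_ker le_rfl P
    have map_inf_ker : (N ⊓ K).map p ≤ (N ⊓ X).map p := map_le_of_le_ker inf_le_right _
    calc (N ⊓ X).map p = (N ⊓ (X ⊔ K)).map p := by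
          rw [h, NormalSubobject.map_sup, sup_eq_left.2 map_inf_ker]
      _ = N.map p ⊓ (X ⊔ K).map p := map_inf_of_ker_le hdi hp N le_sup_right
      _ = N.map p ⊓ X.map p := by rw [map_sup_ker]

end DirectImages

namespace SES

open NormalSubobject

section Hom

variable [HasZeroMorphisms C] {R S T U : SES C}

theorem isKernelOf (S : SES C) : IsKernelOf S.f S.g := ⟨S.w, S.isKernel⟩

theorem isCokernelOf (S : SES C) : IsCokernelOf S.g S.f := ⟨S.w, S.isCokernel⟩

theorem comp_b (u : S ⟶ T) (v : T ⟶ U) : (u ≫ v).b = u.b ≫ v.b := rfl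

theorem zero_b : (0 : S ⟶ T).b = 0 := rfl

theorem f_comp_b_comp_g (u : S ⟶ T) : S.f ≫ u.b ≫ T.g = 0 := by
  rw [← Category.assoc, u.comm₁, Category.assoc, T.w, comp_zero]

theorem hom_ext {u v : S ⟶ T} (h : u.b = v.b) : u = v := by
  have := T.isKernelOf.mono
  have := S.isCokernelOf.epi
  refine Hom.ext ?_ h ?_
  · rw [← cancel_mono T.f, ← u.comm₁, ← v.comm₁, h]
  · rw [← cancel_epi S.g, u.comm₂, v.comm₂, h]

/-- A morphism of short exact sequences is determined by its middle component `b`, which need only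
send the normal subobject `S.f` into `T.f`. -/
noncomputable def homMk (b : S.Y ⟶ T.Y) (h : S.f ≫ b ≫ T.g = 0) : S ⟶ T :=
  have hf : ∃ a, a ≫ T.f = S.f ≫ b :=
    T.isKernelOf.exists_lift _ ((Category.assoc _ _ _).trans h)
  have hg : ∃ c, S.g ≫ c = b ≫ T.g := S.isCokernelOf.exists_desc _ h
  ⟨hf.choose, b, hg.choose, hf.choose_spec.symm, hg.choose_spec⟩

theorem homMk_b (b : S.Y ⟶ T.Y) (h : S.f ≫ b ≫ T.g = 0) : (homMk b h).b = b := rfl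

theorem mono_of_mono_b (m : S ⟶ T) [Mono m.b] : Mono m where
  right_cancellation u v h := hom_ext <| by
    rw [← cancel_mono m.b, ← comp_b, h, comp_b]

theorem epi_of_epi_b (e : S ⟶ T) [Epi e.b] : Epi e where
  left_cancellation u v h := hom_ext <| by
    rw [← cancel_epi e.b, ← comp_b, h, comp_b]

end Hom

variable [HasZeroMorphisms C] [HasKernels C] [HasCokernels C] {A B W : C} {R S T U : SES C}

/-- The short exact sequence formed by the kernel of `f` and the cokernel of that kernel. For
`f = n ≫ T.g` with `n` a normal monomorphism it is the restriction of `T` along `n`. -/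
noncomputable abbrev ofKernel (f : A ⟶ B) : SES C where
  X := kernel f
  Y := A
  Z := cokernel (kernel.ι f)
  f := kernel.ι f
  g := cokernel.π (kernel.ι f)
  w := cokernel.condition _
  isKernel := ((isKernelOf_kernel_ι f).isNormalMonoMap.isKernelOf (isCokernelOf_cokernel_π _)).2
  isCokernel := ⟨cokernelIsCokernel _⟩

/-- The short exact sequence formed by the cokernel of `f` and the kernel of that cokernel. For
`f = T.f ≫ p` with `p` a normal epimorphism it is the direct image of `T` along `p`. -/
noncomputable abbrev ofCokernel (f : A ⟶ B) : SES C where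
  X := kernel (cokernel.π f)
  Y := B
  Z := cokernel f
  f := kernel.ι (cokernel.π f)
  g := cokernel.π f
  w := kernel.condition _
  isKernel := ⟨kernelIsKernel _⟩
  isCokernel :=
    ((isCokernelOf_cokernel_π f).isNormalEpiMap.isCokernelOf (isKernelOf_kernel_ι _)).2

/-- The sequence `0 ↣ W ↠ W`; the functor `W ↦ zeroLeft W` is left adjoint to `S ↦ S.Y`. -/
noncomputable abbrev zeroLeft (W : C) : SES C := ofKernel (𝟙 W)

/-- The sequence `W ↣ W ↠ 0`; the functor `W ↦ zeroRight W` is right adjoint to `S ↦ S.Y`. -/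
noncomputable abbrev zeroRight (W : C) : SES C := ofCokernel (𝟙 W)

theorem zeroLeft_f (W : C) : (zeroLeft W).f = 0 :=
  (Category.comp_id _).symm.trans (kernel.condition (𝟙 W))

theorem zeroRight_g (W : C) : (zeroRight W).g = 0 :=
  (Category.id_comp _).symm.trans (cokernel.condition (𝟙 W))

/-- The morphism out of `zeroLeft W` with middle component `t`. -/
noncomputable def ofZeroLeft (t : W ⟶ T.Y) : zeroLeft W ⟶ T :=
  homMk t (by rw [zeroLeft_f, zero_comp])

/-- The morphism into `zeroRight W` with middle component `t`. -/
noncomputable def toZeroRight (t : T.Y ⟶ W) : T ⟶ zeroRight W :=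
  homMk t (by rw [zeroRight_g, comp_zero, comp_zero])

theorem mono_b (m : S ⟶ T) [Mono m] : Mono m.b where
  right_cancellation s t h := congrArg Hom.b <|
    (cancel_mono m).1 (hom_ext h : ofZeroLeft s ≫ m = ofZeroLeft t ≫ m)

theorem epi_b (e : S ⟶ T) [Epi e] : Epi e.b where
  left_cancellation s t h := congrArg Hom.b <|
    (cancel_epi e).1 (hom_ext h : e ≫ toZeroRight s = e ≫ toZeroRight t)

theorem isKernelOf_b {m : S ⟶ T} {u : T ⟶ U} (h : IsKernelOf m u) : IsKernelOf m.b u.b := by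
  have := h.mono
  have := mono_b m
  refine .of_exists_lift (congrArg Hom.b h.comp_eq_zero) fun W t ht => ?_
  obtain ⟨s, hs⟩ := h.exists_lift (ofZeroLeft t) (hom_ext ht)
  exact ⟨s.b, congrArg Hom.b hs⟩

theorem isCokernelOf_b {e : T ⟶ U} {u : S ⟶ T} (h : IsCokernelOf e u) :
    IsCokernelOf e.b u.b := by
  have := h.epi
  have := epi_b e
  refine .of_exists_desc (congrArg Hom.b h.comp_eq_zero) fun W t ht => ?_
  obtain ⟨s, hs⟩ := h.exists_desc (toZeroRight t) (hom_ext ht)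
  exact ⟨s.b, congrArg Hom.b hs⟩

theorem isKernelOf_f {m : S ⟶ T} {u : T ⟶ U} (h : IsKernelOf m u) :
    IsKernelOf S.f (m.b ≫ T.g) := by
  have hb := isKernelOf_b h
  have := hb.mono
  have := S.isKernelOf.mono
  refine .of_exists_lift (f_comp_b_comp_g m) fun W t ht => ?_
  let v : zeroRight W ⟶ T := homMk (t ≫ m.b) (by rw [Category.assoc, ht, comp_zero])
  obtain ⟨r, hr⟩ := h.exists_lift v <| hom_ext <| by
    rw [comp_b, homMk_b, Category.assoc, hb.comp_eq_zero, comp_zero, zero_b]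
  have hrt : r.b = t := (cancel_mono m.b).1 (congrArg Hom.b hr)
  apply S.isKernelOf.exists_lift
  rw [← hrt, ← r.comm₂, zeroRight_g, zero_comp]

theorem isCokernelOf_g {e : T ⟶ U} {u : S ⟶ T} (h : IsCokernelOf e u) :
    IsCokernelOf U.g (T.f ≫ e.b) := by
  have hb := isCokernelOf_b h
  have := hb.epi
  have := U.isCokernelOf.epi
  refine .of_exists_desc ((Category.assoc _ _ _).trans (f_comp_b_comp_g e)) fun W t ht => ?_
  let v : T ⟶ zeroLeft W := homMk (e.b ≫ t) (by
    rw [← Category.assoc, ← Category.assoc, ht, zero_comp])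
  obtain ⟨r, hr⟩ := h.exists_desc v <| hom_ext <| by
    rw [comp_b, homMk_b, reassoc_of% hb.comp_eq_zero, zero_comp, zero_b]
  have hrt : r.b = t := (cancel_epi e.b).1 (congrArg Hom.b hr)
  apply U.isCokernelOf.exists_desc
  rw [← hrt, r.comm₁, zeroLeft_f, comp_zero]

theorem isNormalMonoMap_iff (m : S ⟶ T) :
    IsNormalMonoMap m ↔ IsNormalMonoMap m.b ∧ IsKernelOf S.f (m.b ≫ T.g) := by
  constructor
  · intro h
    obtain ⟨U, u, hu⟩ := h.exists_isKernelOf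
    exact ⟨(isKernelOf_b hu).isNormalMonoMap, isKernelOf_f hu⟩
  · rintro ⟨hb, hf⟩
    have := hb.mono
    have := mono_of_mono_b m
    have hbπ := hb.isKernelOf (isCokernelOf_cokernel_π m.b)
    refine IsKernelOf.isNormalMonoMap (f := toZeroRight (cokernel.π m.b)) <|
      .of_exists_lift (hom_ext hbπ.comp_eq_zero) fun R t ht => ?_
    obtain ⟨s, hs⟩ := hbπ.exists_lift t.b (congrArg Hom.b ht)
    obtain ⟨r, hr⟩ := hf.exists_lift (R.f ≫ s) (by
      rw [Category.assoc, reassoc_of% hs, f_comp_b_comp_g])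
    exact ⟨homMk s (by rw [← Category.assoc, ← hr, Category.assoc, S.w, comp_zero]), hom_ext hs⟩

theorem isNormalEpiMap_iff (e : T ⟶ U) :
    IsNormalEpiMap e ↔ IsNormalEpiMap e.b ∧ IsCokernelOf U.g (T.f ≫ e.b) := by
  constructor
  · intro h
    obtain ⟨S, u, hu⟩ := h.exists_isCokernelOf
    exact ⟨(isCokernelOf_b hu).isNormalEpiMap, isCokernelOf_g hu⟩
  · rintro ⟨hb, hg⟩
    have := hb.epi
    have := epi_of_epi_b e
    have hbι := hb.isCokernelOf (isKernelOf_kernel_ι e.b)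
    refine IsCokernelOf.isNormalEpiMap (f := ofZeroLeft (kernel.ι e.b)) <|
      .of_exists_desc (hom_ext hbι.comp_eq_zero) fun R t ht => ?_
    obtain ⟨s, hs⟩ := hbι.exists_desc t.b (congrArg Hom.b ht)
    obtain ⟨r, hr⟩ := hg.exists_desc (s ≫ R.g) (by
      rw [Category.assoc, reassoc_of% hs, f_comp_b_comp_g])
    exact ⟨homMk s (by rw [← hr, reassoc_of% U.w, zero_comp]), hom_ext hs⟩

/- The factorization is that of the antinormal morphism `(N, N ⊓ X) ⟶ (A, X) ⟶ (B, p(X))`, where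
`X` is the normal subobject `T.f` of `A = T.Y`. -/
theorem exists_factorization (h : IsDiExact (SES C)) (T : SES C) {N : C} {n : N ⟶ T.Y}
    {p : T.Y ⟶ B} (hn : IsNormalMonoMap n) (hp : IsNormalEpiMap p) :
    ∃ (I : SES C) (e : N ⟶ I.Y) (m : I.Y ⟶ B),
      IsNormalEpiMap e ∧ IsNormalMonoMap m ∧ e ≫ m = n ≫ p ∧
        IsCokernelOf I.g (kernel.ι (n ≫ T.g) ≫ e) ∧
          IsKernelOf I.f (m ≫ cokernel.π (T.f ≫ p)) := by
  let i : ofKernel (n ≫ T.g) ⟶ T := homMk n (kernel.condition _)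
  let q : T ⟶ ofCokernel (T.f ≫ p) := homMk p <| by
    rw [← Category.assoc, cokernel.condition]
  have hi : IsNormalMonoMap i := (isNormalMonoMap_iff i).2 ⟨hn, isKernelOf_kernel_ι _⟩
  have hq : IsNormalEpiMap q := (isNormalEpiMap_iff q).2 ⟨hp, isCokernelOf_cokernel_π _⟩
  obtain ⟨I, e, m, he, hm, hem⟩ := h.exists_factorization hi hq
  obtain ⟨heb, hIg⟩ := (isNormalEpiMap_iff e).1 he
  obtain ⟨hmb, hIf⟩ := (isNormalMonoMap_iff m).1 hm
  exact ⟨I, e.b, m.b, heb, hmb, congrArg Hom.b hem, hIg, hIf⟩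

theorem isDiExact_of_isDiExact_ses (h : IsDiExact (SES C)) : IsDiExact C := by
  rintro A B _ ⟨Y, n, p, hn, hp, rfl⟩
  obtain ⟨I, e, m, he, hm, hem, -⟩ := exists_factorization h (zeroRight Y) hn hp
  exact ⟨I.Y, e, m, he, hm, hem⟩

theorem directImagesPreserveMeets_of_isDiExact_ses (h : IsDiExact (SES C)) :
    DirectImagesPreserveMeets C := by
  intro A B p hp N X
  let T : SES C := ofCokernel X.1.arrow
  let l := kernel.ι (N.1.arrow ≫ T.g)
  have hX : normalImage T.f = X := by
    rw [normalImage_eq_of_isCokernelOf T.isCokernelOf (isCokernelOf_cokernel_π X.1.arrow),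
      normalImage_arrow]
  obtain ⟨I, e, m, he, hm, hem, hIg, hIf⟩ := exists_factorization h T N.2 hp
  have := he.epi
  calc (N ⊓ X).map p
    _ = (normalImage N.1.arrow ⊓ normalImage T.f).map p := by rw [hX, normalImage_arrow]
    _ = normalImage ((l ≫ N.1.arrow) ≫ p) := by
      rw [normalImage_inf_normalImage N.2 T.isKernelOf (isKernelOf_kernel_ι _), map_normalImage]
    _ = (normalImage (l ≫ e)).map m := by
      rw [map_normalImage, Category.assoc, Category.assoc, hem]
    _ = normalImage (I.f ≫ m) := by
      rw [normalImage_eq_of_isCokernelOf hIg I.isCokernelOf, map_normalImage]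
    _ = (normalImage N.1.arrow).map p ⊓ (normalImage T.f).map p :=
      (map_normalImage_inf_map_normalImage hm hem (isCokernelOf_cokernel_π _) hIf).symm
    _ = N.map p ⊓ X.map p := by rw [hX, normalImage_arrow]

theorem normalImage_kernel_ι_eq (hdi : IsDiExact C) (h : DirectImagesPreserveMeets C)
    {m : S ⟶ T} {e : T ⟶ U} (hm : IsNormalMonoMap m) (he : IsNormalEpiMap e)
    {r : S.Y ⟶ A} [Epi r] {i : A ⟶ U.Y} (hi : IsNormalMonoMap i) (hri : r ≫ i = m.b ≫ e.b) :
    normalImage (kernel.ι (i ≫ U.g)) = normalImage (S.f ≫ r) := by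
  obtain ⟨hmb, hSf⟩ := (isNormalMonoMap_iff m).1 hm
  obtain ⟨heb, hUg⟩ := (isNormalEpiMap_iff e).1 he
  have hk := isKernelOf_kernel_ι (i ≫ U.g)
  have hcomp : (S.f ≫ r) ≫ i = (S.f ≫ m.b) ≫ e.b := by
    rw [Category.assoc, hri, Category.assoc]
  have himage : normalImage (kernel.ι (i ≫ U.g) ≫ i) = normalImage ((S.f ≫ r) ≫ i) := calc
    _ = (normalImage m.b).map e.b ⊓ (normalImage T.f).map e.b :=
      (map_normalImage_inf_map_normalImage hi hri hUg hk).symm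
    _ = (normalImage m.b ⊓ normalImage T.f).map e.b := (h _ heb _ _).symm
    _ = normalImage ((S.f ≫ r) ≫ i) := by
      rw [normalImage_inf_normalImage hmb T.isKernelOf hSf, map_normalImage, hcomp]
  have hnormal : IsNormalMap ((S.f ≫ r) ≫ i) := by
    rw [hcomp]
    exact hdi.exists_factorization (hmb.comp_of_isKernelOf hSf) heb
  refine le_antisymm (normalImage_le_of_comp_le hi hnormal himage.le) ?_
  rw [normalImage_le_iff, normalImage_factors_iff hk.isNormalMonoMap]
  apply hk.exists_lift
  rw [← Category.assoc, hcomp]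
  simpa only [Category.assoc, comp_b] using f_comp_b_comp_g (m ≫ e)

theorem isDiExact_ses (hdi : IsDiExact C) (h : DirectImagesPreserveMeets C) :
    IsDiExact (SES C) := by
  rintro S U _ ⟨T, m, e, hm, he, rfl⟩
  have hmb := ((isNormalMonoMap_iff m).1 hm).1
  have heb := ((isNormalEpiMap_iff e).1 he).1
  obtain ⟨J, r, i, hr, hi, hri⟩ := hdi.exists_factorization hmb heb
  have := hr.epi
  let I : SES C := ofKernel (i ≫ U.g)
  have hIg : IsCokernelOf I.g (S.f ≫ r) :=
    isCokernelOf_of_normalImage_eq I.isCokernelOf (normalImage_kernel_ι_eq hdi h hm he hi hri)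
  let e' : S ⟶ I := homMk r ((Category.assoc _ _ _).symm.trans hIg.comp_eq_zero)
  let m' : I ⟶ U := homMk i (kernel.condition _)
  exact ⟨I, e', m', (isNormalEpiMap_iff e').2 ⟨hr, hIg⟩,
    (isNormalMonoMap_iff m').2 ⟨hi, isKernelOf_kernel_ι _⟩, hom_ext hri⟩

theorem isDiExact_ses_iff : IsDiExact (SES C) ↔ IsDiExact C ∧ DirectImagesPreserveMeets C :=
  ⟨fun h => ⟨isDiExact_of_isDiExact_ses h, directImagesPreserveMeets_of_isDiExact_ses h⟩,
    fun h => isDiExact_ses h.1 h.2⟩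

end SES

theorem stmt15_general [HasZeroMorphisms C] [HasKernels C] [HasCokernels C] :
    IsDiExact (SES C) ↔ IsDiExact C ∧ ∀ A : C, NormalSubobjectsDistrib A := by
  rw [SES.isDiExact_ses_iff]
  exact and_congr_right directImagesPreserveMeets_iff

/-- Let `C` be a di-exact z-exact category.  Then the category `SES C`
of short exact sequences of `C` is di-exact if and only if the lattice of normal
subobjects of `A` is distributive for every object `A` of `C`. -/
theorem stmt15 {C : Type u} [Category.{v} C] [HasZeroObject C] [HasZeroMorphisms C]
    [HasKernels C] [HasCokernels C] (hdi : IsDiExact C) :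
    IsDiExact (SES C) ↔ ∀ A : C, NormalSubobjectsDistrib A := by
  rw [stmt15_general, and_iff_right hdi]
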